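/- Let θ be an irrational real number satisfying kθ² + lθ + m = 0 for integers k, l, m with k ≥ 2 and gcd(k,l,m) = 1. Then kθ is a quadratic algebraic integer, ℤ + ℤkθ is a unital subring of ℝ, and IM_+(ℤ + ℤθ) equals the group of positive invertible elements of the ring ℤ + ℤkθ, i.e. IM_+(ℤ + ℤθ) = {t ∈ ℝ : t > 0, t ∈ ℤ + ℤkθ, t⁻¹ ∈ ℤ + ℤkθ}. -/

import Mathlib

/-- The positive inner multiplier group of an additive subgroup `E` of `ℝ`:
`IM₊(E) = {t > 0 | t ∈ E, t⁻¹ ∈ E, tE = E}`. -/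
def IMplus (E : AddSubgroup ℝ) : Set ℝ :=
  {t : ℝ | 0 < t ∧ t ∈ E ∧ t⁻¹ ∈ E ∧ (fun x => t * x) '' (E : Set ℝ) = (E : Set ℝ)}

/-- The additive subgroup `ℤ + ℤθ = {a + bθ : a, b ∈ ℤ}` of `ℝ`. -/
def zTheta (θ : ℝ) : AddSubgroup ℝ where
  carrier := {x : ℝ | ∃ a b : ℤ, x = (a : ℝ) + (b : ℝ) * θ}
  zero_mem' := ⟨0, 0, by push_cast; ring⟩
  add_mem' := by
    rintro x y ⟨a, b, rfl⟩ ⟨c, d, rfl⟩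
    exact ⟨a + c, b + d, by push_cast; ring⟩
  neg_mem' := by
    rintro x ⟨a, b, rfl⟩
    exact ⟨-a, -b, by push_cast; ring⟩

theorem aux_dvd (k l m b : ℤ) (hgcd : Int.gcd (Int.gcd k l) m = 1)
    (h1 : k ∣ b * l) (h2 : k ∣ b * m) : k ∣ b := by
  have e1 := Int.gcd_eq_gcd_ab k l
  have e2 := Int.gcd_eq_gcd_ab (Int.gcd k l) m
  rw [hgcd] at e2
  have e3 : b = (b * k * Int.gcdA k l + b * l * Int.gcdB k l) * Int.gcdA (Int.gcd k l) m
      + b * m * Int.gcdB (Int.gcd k l) m := by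
    push_cast at e2
    linear_combination b * e2 + b * Int.gcdA (Int.gcd k l) m * e1
  rw [e3]
  exact dvd_add (Dvd.dvd.mul_right (dvd_add (Dvd.dvd.mul_right (Dvd.intro_left b rfl) _)
    (Dvd.dvd.mul_right h1 _)) _) (Dvd.dvd.mul_right h2 _)

theorem aux_indep (θ : ℝ) (hirr : Irrational θ) (a b : ℤ) (h : (a : ℝ) + b * θ = 0) :
    a = 0 ∧ b = 0 := by
  have hb : b = 0 := by
    by_contra hb
    have hb' : (b : ℝ) ≠ 0 := by exact_mod_cast hb
    apply hirr
    refine ⟨-(a : ℚ) / b, ?_⟩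
    push_cast
    field_simp
    linarith
  subst hb
  refine ⟨?_, rfl⟩
  have : (a : ℝ) = 0 := by simpa using h
  exact_mod_cast this

theorem aux_mem (θ : ℝ) (hirr : Irrational θ) (k l m : ℤ)
    (hgcd : Int.gcd (Int.gcd k l) m = 1)
    (hquad : (k : ℝ) * θ ^ 2 + (l : ℝ) * θ + (m : ℝ) = 0) (s : ℝ)
    (h1 : s ∈ zTheta θ) (h2 : s * θ ∈ zTheta θ) : s ∈ zTheta ((k : ℝ) * θ) := by
  obtain ⟨a, b, rfl⟩ := h1
  obtain ⟨c, d, h⟩ := h2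
  have := aux_indep θ hirr (k * c + b * m) (k * d + b * l - k * a) (by
    push_cast
    linear_combination (b : ℝ) * hquad - (k : ℝ) * h)
  obtain ⟨u, v⟩ := this
  obtain ⟨e, rfl⟩ := aux_dvd k l m b hgcd ⟨a - d, by linarith⟩ ⟨-c, by linarith⟩
  exact ⟨a, e, by push_cast; ring⟩

theorem aux_mul (θ : ℝ) (k l m : ℤ)
    (hquad : (k : ℝ) * θ ^ 2 + (l : ℝ) * θ + (m : ℝ) = 0) (s x : ℝ)
    (hs : s ∈ zTheta ((k : ℝ) * θ)) (hx : x ∈ zTheta θ) : s * x ∈ zTheta θ := by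
  obtain ⟨a, b, rfl⟩ := hs
  obtain ⟨c, d, rfl⟩ := hx
  refine ⟨a * c - b * d * m, a * d + b * c * k - b * d * l, ?_⟩
  push_cast
  linear_combination (b : ℝ) * d * hquad

theorem aux_one (θ : ℝ) : (1 : ℝ) ∈ zTheta θ := ⟨1, 0, by simp⟩

/-- if `θ` is irrational with `kθ² + lθ + m = 0`, `k ≥ 2`,
`gcd(k,l,m) = 1`, then `kθ` is a quadratic algebraic integer, `ℤ + ℤkθ` is a unital
subring of `ℝ`, and `IM₊(ℤ + ℤθ)` equals the group of positive invertible elements of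
the ring `ℤ + ℤkθ`. -/
theorem IMplus_zTheta_eq_posUnits_zktheta
    (θ : ℝ) (hirr : Irrational θ) (k l m : ℤ) (hk : 2 ≤ k)
    (hgcd : Int.gcd (Int.gcd k l) m = 1)
    (hquad : (k : ℝ) * θ ^ 2 + (l : ℝ) * θ + (m : ℝ) = 0) :
    (∃ l' m' : ℤ, ((k : ℝ) * θ) ^ 2 + (l' : ℝ) * ((k : ℝ) * θ) + (m' : ℝ) = 0) ∧
    ((1 : ℝ) ∈ zTheta ((k : ℝ) * θ) ∧
      ∀ x ∈ zTheta ((k : ℝ) * θ), ∀ y ∈ zTheta ((k : ℝ) * θ),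
        x * y ∈ zTheta ((k : ℝ) * θ)) ∧
    IMplus (zTheta θ) =
      {t : ℝ | 0 < t ∧ t ∈ zTheta ((k : ℝ) * θ) ∧ t⁻¹ ∈ zTheta ((k : ℝ) * θ)} := by
  refine ⟨⟨l, k * m, ?_⟩, ⟨aux_one _, ?_⟩, ?_⟩
  · push_cast
    linear_combination (k : ℝ) * hquad
  · rintro x ⟨a, b, rfl⟩ y ⟨c, d, rfl⟩
    refine ⟨a * c - b * d * k * m, a * d + b * c - b * d * l, ?_⟩
    push_cast
    linear_combination (b : ℝ) * d * k * hquad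
  · have hθ : θ ∈ zTheta θ := ⟨0, 1, by simp⟩
    ext t
    constructor
    · rintro ⟨h0, h1, h2, h3⟩
      refine ⟨h0, aux_mem θ hirr k l m hgcd hquad t h1 ?_,
        aux_mem θ hirr k l m hgcd hquad _ h2 ?_⟩
      · have : t * θ ∈ (zTheta θ : Set ℝ) := h3 ▸ ⟨θ, hθ, rfl⟩
        exact this
      · have : θ ∈ (fun x => t * x) '' (zTheta θ : Set ℝ) := by rw [h3]; exact hθ
        obtain ⟨x, hx, hxt⟩ := this
        have e : t⁻¹ * θ = x := by
          simp only at hxt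
          rw [← hxt, inv_mul_cancel_left₀ h0.ne']
        rw [e]
        exact hx
    · rintro ⟨h0, h1, h2⟩
      refine ⟨h0, by simpa using aux_mul θ k l m hquad t 1 h1 (aux_one θ),
        by simpa using aux_mul θ k l m hquad _ 1 h2 (aux_one θ), ?_⟩
      ext x
      constructor
      · rintro ⟨y, hy, rfl⟩
        exact aux_mul θ k l m hquad t y h1 hy
      · intro hx
        exact ⟨t⁻¹ * x, aux_mul θ k l m hquad _ x h2 hx, mul_inv_cancel_left₀ h0.ne' x⟩
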